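/- Let n ≥ 1 and let p, q ∈ M_n with pM_n ∩ qM_n ≠ ∅. Then either (1) q ∈ pM_n or p ∈ qM_n; or (2) there exist letters x, y ∈ Q_n such that v := p·x = q·y is an intersection base and, for every u ∈ pM_n ∩ qM_n and every letter z ∈ X_n, u·z ≠ v. -/

import Mathlib

namespace Malcev

/-- The alphabet `X_n`: letters `a, b, c, d` together with `A_i, B_i, C_i, D_i`
for `i` ranging over `Fin n` (so `A ⟨0, _⟩` represents `A_1`, etc.). -/
inductive Letter (n : ℕ) : Type
  | a | b | c | d
  | A (i : Fin n) | B (i : Fin n) | C (i : Fin n) | D (i : Fin n)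
  deriving DecidableEq

open FreeMonoid

/-- The defining relations `ρ_n`. -/
inductive rel (n : ℕ) : FreeMonoid (Letter n) → FreeMonoid (Letter n) → Prop
  | da (h : 0 < n) :
      rel n (of .d * of .a) (of (.A ⟨0, h⟩) * of (.C ⟨0, h⟩))
  | AD (i : ℕ) (h : i + 1 < n) :
      rel n (of (.A ⟨i, Nat.lt_of_succ_lt h⟩) * of (.D ⟨i, Nat.lt_of_succ_lt h⟩))
            (of (.A ⟨i + 1, h⟩) * of (.C ⟨i + 1, h⟩))
  | An (h : 0 < n) :
      rel n (of (.A ⟨n - 1, Nat.sub_lt h Nat.one_pos⟩) * of (.D ⟨n - 1, Nat.sub_lt h Nat.one_pos⟩))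
            (of .d * of .b)
  | cb (h : 0 < n) :
      rel n (of .c * of .b)
            (of (.B ⟨n - 1, Nat.sub_lt h Nat.one_pos⟩) * of (.D ⟨n - 1, Nat.sub_lt h Nat.one_pos⟩))
  | BC (i : ℕ) (h : i + 1 < n) :
      rel n (of (.B ⟨i + 1, h⟩) * of (.C ⟨i + 1, h⟩))
            (of (.B ⟨i, Nat.lt_of_succ_lt h⟩) * of (.D ⟨i, Nat.lt_of_succ_lt h⟩))

/-- The congruence on the free monoid generated by `ρ_n`. -/
def Mcon (n : ℕ) : Con (FreeMonoid (Letter n)) := conGen (rel n)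

/-- The presented monoid `M_n = Mon⟨X_n | ρ_n⟩`. -/
abbrev Mn (n : ℕ) : Type := (Mcon n).Quotient

/-- The quotient (natural) map `X_n* → M_n`. -/
def mk (n : ℕ) : FreeMonoid (Letter n) →* Mn n := (Mcon n).mk'

/-- The image in `M_n` of a single letter. -/
def gen {n : ℕ} (x : Letter n) : Mn n := mk n (of x)

/-- The image in `M_n` of a word (given as a list of letters). -/
def word {n : ℕ} (w : List (Letter n)) : Mn n := mk n (ofList w)

/-- The set `P_n = {c, d, A_1, …, A_n, B_1, …, B_n}`. -/
def inP {n : ℕ} : Letter n → Prop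
  | .c => True | .d => True | .A _ => True | .B _ => True | _ => False

/-- The set `Q_n = {a, b, C_1, …, C_n, D_1, …, D_n}`. -/
def inQ {n : ℕ} : Letter n → Prop
  | .a => True | .b => True | .C _ => True | .D _ => True | _ => False

/-- `inR x y` means the two-letter word `xy` belongs to
`R_n = {db, A_1C_1, …, A_nC_n, B_1D_1, …, B_nD_n}`. -/
def inR {n : ℕ} : Letter n → Letter n → Prop
  | .d, .b => True
  | .A i, .C j => i = j
  | .B i, .D j => i = j
  | _, _ => False

/-- `inL x y` means the two-letter word `xy` belongs to
`L_n = {cb, da, A_1D_1, …, A_nD_n, B_2C_2, …, B_nC_n}`. -/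
def inL {n : ℕ} : Letter n → Letter n → Prop
  | .c, .b => True
  | .d, .a => True
  | .A i, .D j => i = j
  | .B i, .C j => i = j ∧ 1 ≤ i.val
  | _, _ => False

/-- A word is in left normal form if no two consecutive letters form a word in `R_n`. -/
def LeftNormal {n : ℕ} (w : List (Letter n)) : Prop :=
  List.Chain' (fun x y => ¬ inR x y) w

/-- `v ∈ M_n` is an intersection base if some word `a_1 ⋯ a_m` (`m ≥ 2`) in left
normal form equals `v` in `M_n` and its final two letters form a word in `L_n`. -/
def IsIntersectionBase {n : ℕ} (v : Mn n) : Prop :=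
  ∃ (w : List (Letter n)) (x y : Letter n),
    LeftNormal (w ++ [x, y]) ∧ word (w ++ [x, y]) = v ∧ inL x y

/-- The principal right ideal `pM_n`. -/
def rIdeal {n : ℕ} (p : Mn n) : Set (Mn n) := {x | ∃ m, x = p * m}


theorem word_append {n : ℕ} (u v : List (Letter n)) : word (u ++ v) = word u * word v :=
  map_mul (mk n) (ofList u) (ofList v)

theorem word_singleton {n : ℕ} (x : Letter n) : word [x] = gen x := rfl

theorem word_surjective {n : ℕ} (p : Mn n) : ∃ w, word w = p := by
  obtain ⟨w, rfl⟩ := Con.mk'_surjective p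
  exact ⟨w.toList, rfl⟩

theorem word_cons {n : ℕ} (x : Letter n) (w : List (Letter n)) :
    word (x :: w) = gen x * word w :=
  word_append [x] w

theorem mk_eq_of_rel {n : ℕ} {u v : FreeMonoid (Letter n)} (h : rel n u v) : mk n u = mk n v :=
  (Con.eq _).2 (ConGen.Rel.of _ _ h)

/-- The left normal form of a two-letter word. -/
def pairNF {n : ℕ} : Letter n → Letter n → Letter n × Letter n
  | .d, .b => if h : 0 < n then
      (.A ⟨n - 1, Nat.sub_lt h Nat.one_pos⟩, .D ⟨n - 1, Nat.sub_lt h Nat.one_pos⟩) else (.d, .b)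
  | .A i, .C j => if i = j then
      if i.val = 0 then (.d, .a) else
        (.A ⟨i.val - 1, (Nat.sub_le _ _).trans_lt i.isLt⟩,
          .D ⟨i.val - 1, (Nat.sub_le _ _).trans_lt i.isLt⟩)
      else (.A i, .C j)
  | .B i, .D j => if i = j then
      if h : i.val + 1 < n then (.B ⟨i.val + 1, h⟩, .C ⟨i.val + 1, h⟩) else (.c, .b)
      else (.B i, .D j)
  | x, y => (x, y)

theorem pairNF_of_not_inR {n : ℕ} {x y : Letter n} (h : ¬ inR x y) : pairNF x y = (x, y) := by
  cases x <;> cases y <;> simp_all [inR, pairNF]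

theorem inL_pairNF {n : ℕ} (hn : 1 ≤ n) {x y : Letter n} (h : inR x y) :
    inL (pairNF x y).1 (pairNF x y).2 := by
  cases x <;> cases y <;> simp only [inR] at h <;> simp only [pairNF] <;> split_ifs <;>
    simp_all [inL]

theorem word_pairNF {n : ℕ} (x y : Letter n) :
    word [(pairNF x y).1, (pairNF x y).2] = word [x, y] := by
  by_cases hR : inR x y
  swap
  · rw [pairNF_of_not_inR hR]
  cases x <;> cases y <;> simp only [inR] at hR
  case d.b =>
    by_cases h : 0 < n
    · simp only [pairNF, dif_pos h]
      exact mk_eq_of_rel (rel.An h)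
    · simp only [pairNF, dif_neg h]
  case A.C i j =>
    subst hR
    obtain ⟨_ | i, hi⟩ := i
    · simp only [pairNF, if_true]
      exact mk_eq_of_rel (rel.da hi)
    · simp only [pairNF, if_true, if_neg (Nat.succ_ne_zero i)]
      exact mk_eq_of_rel (rel.AD i hi)
  case B.D i j =>
    subst hR
    obtain ⟨i, hi⟩ := i
    by_cases h : i + 1 < n
    · simp only [pairNF, if_true, dif_pos h]
      exact mk_eq_of_rel (rel.BC i h)
    · obtain rfl : i = n - 1 := by omega
      simp only [pairNF, if_true, dif_neg h]
      exact mk_eq_of_rel (rel.cb (by omega))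

theorem not_inR_of_inL {n : ℕ} {x y : Letter n} (h : inL x y) : ¬ inR x y := by
  cases x <;> cases y <;> simp_all [inL, inR]

theorem inP_of_inL {n : ℕ} {x y : Letter n} (h : inL x y) : inP x := by
  cases x <;> cases y <;> simp_all [inL, inP]

theorem inQ_of_inL {n : ℕ} {x y : Letter n} (h : inL x y) : inQ y := by
  cases x <;> cases y <;> simp_all [inL, inQ]

theorem inP_of_inR {n : ℕ} {x y : Letter n} (h : inR x y) : inP x := by
  cases x <;> cases y <;> simp_all [inR, inP]

theorem inQ_of_inR {n : ℕ} {x y : Letter n} (h : inR x y) : inQ y := by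
  cases x <;> cases y <;> simp_all [inR, inQ]

theorem not_inP_of_inQ {n : ℕ} {x : Letter n} (h : inQ x) : ¬ inP x := by
  cases x <;> simp_all [inQ, inP]

/-- Every element of `M_n` has a representative in left normal form. -/
theorem exists_leftNormal {n : ℕ} (hn : 1 ≤ n) (w : List (Letter n)) :
    ∃ w', LeftNormal w' ∧ word w' = word w := by
  induction w with
  | nil => exact ⟨[], List.isChain_nil, rfl⟩
  | cons x w ih =>
    obtain ⟨w', hw', heq⟩ := ih
    rw [word_cons, ← heq]
    cases w' with
    | nil => exact ⟨[x], List.isChain_singleton _, rfl⟩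
    | cons y w' =>
      by_cases h : inR x y
      · have hL := inL_pairNF hn h
        refine ⟨(pairNF x y).1 :: (pairNF x y).2 :: w',
          List.isChain_cons_cons.2 ⟨not_inR_of_inL hL, List.isChain_cons.2
            ⟨fun z _ hz => not_inP_of_inQ (inQ_of_inL hL) (inP_of_inR hz),
              (List.isChain_cons.1 hw').2⟩⟩, ?_⟩
        rw [← word_cons]
        change word ([(pairNF x y).1, (pairNF x y).2] ++ w') = word ([x, y] ++ w')
        rw [word_append, word_pairNF, ← word_append]
      · exact ⟨x :: y :: w', List.isChain_cons_cons.2 ⟨h, hw'⟩, word_cons _ _⟩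

/-- A combinatorial description of the congruence: two words are related when they agree up to
replacing disjoint two-letter factors in `P_n Q_n` by factors with the same normal form. -/
inductive Similar {n : ℕ} : List (Letter n) → List (Letter n) → Prop
  | nil : Similar [] []
  | cons (x : Letter n) {u v : List (Letter n)} : Similar u v → Similar (x :: u) (x :: v)
  | pair {t x s y : Letter n} {u v : List (Letter n)} (ht : inP t) (hx : inQ x) (hs : inP s)
      (hy : inQ y) (h : pairNF t x = pairNF s y) :
      Similar u v → Similar (t :: x :: u) (s :: y :: v)

namespace Similar

theorem refl {n : ℕ} (u : List (Letter n)) : Similar u u := by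
  induction u with
  | nil => exact nil
  | cons x u ih => exact cons x ih

theorem symm {n : ℕ} {u v : List (Letter n)} (h : Similar u v) : Similar v u := by
  induction h with
  | nil => exact nil
  | cons x _ ih => exact cons x ih
  | pair ht hx hs hy h _ ih => exact pair hs hy ht hx h.symm ih

theorem of_cons_inQ {n : ℕ} {x : Letter n} {u v : List (Letter n)} (hx : inQ x)
    (h : Similar (x :: u) v) : ∃ w, v = x :: w ∧ Similar u w := by
  cases h with
  | cons _ h => exact ⟨_, rfl, h⟩
  | pair ht => exact absurd ht (not_inP_of_inQ hx)

theorem trans {n : ℕ} {u v w : List (Letter n)} (h : Similar u v) (h' : Similar v w) :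
    Similar u w := by
  induction h generalizing w with
  | nil => exact h'
  | cons x huv ih =>
    cases h' with
    | cons _ h' => exact cons x (ih h')
    | pair ht hx hs hy e h' =>
      obtain ⟨u', rfl, -⟩ := of_cons_inQ hx huv.symm
      obtain ⟨w', hw', hu'⟩ := of_cons_inQ hx (ih (cons _ h'))
      obtain rfl := (List.cons.inj hw').2
      exact pair ht hx hs hy e hu'
  | pair ht hx hs hy e huv ih =>
    cases h' with
    | cons _ h' =>
      obtain ⟨w', rfl, hw'⟩ := of_cons_inQ hy h'
      exact pair ht hx hs hy e (ih hw')
    | pair _ _ hs' hy' e' h' => exact pair ht hx hs' hy' (e.trans e') (ih h')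

theorem append {n : ℕ} {u v u' v' : List (Letter n)} (h : Similar u v) (h' : Similar u' v') :
    Similar (u ++ u') (v ++ v') := by
  induction h with
  | nil => exact h'
  | cons x _ ih => exact cons x ih
  | pair ht hx hs hy e _ ih => exact pair ht hx hs hy e ih

theorem length_eq {n : ℕ} {u v : List (Letter n)} (h : Similar u v) : u.length = v.length := by
  induction h with
  | nil => rfl
  | cons x _ ih => simp [ih]
  | pair _ _ _ _ _ _ ih => simp [ih]

theorem word_eq {n : ℕ} {u v : List (Letter n)} (h : Similar u v) : word u = word v := by
  induction h with
  | nil => rfl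
  | cons x _ ih => rw [word_cons, word_cons, ih]
  | @pair t x s y u v _ _ _ _ e _ ih =>
    change word ([t, x] ++ u) = word ([s, y] ++ v)
    rw [word_append, word_append, ih, ← word_pairNF t x, e, word_pairNF]

theorem of_rel {n : ℕ} {u v : FreeMonoid (Letter n)} (h : rel n u v) :
    Similar u.toList v.toList := by
  cases h
  case da h => exact pair trivial trivial trivial trivial (by simp [pairNF]) nil
  case AD i h => exact pair trivial trivial trivial trivial (by simp [pairNF]) nil
  case An h => exact pair trivial trivial trivial trivial (by simp [pairNF, h]) nil
  case cb h =>
    exact pair trivial trivial trivial trivial (by simp [pairNF, Nat.sub_add_cancel h]) nil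
  case BC i h => exact pair trivial trivial trivial trivial (by simp [pairNF, h]) nil

theorem of_word_eq {n : ℕ} {u v : List (Letter n)} (h : word u = word v) : Similar u v := by
  let c : Con (FreeMonoid (Letter n)) :=
    { r := fun u v => Similar u.toList v.toList
      iseqv := ⟨fun u => refl u.toList, symm, trans⟩
      mul' := append }
  have hc : Mcon n ≤ c := Con.conGen_le.2 fun _ _ => of_rel
  exact hc ((Con.eq _).1 h)

/-- Cutting two similar words at the same length either gives similar prefixes, or cuts both words
inside a factor in `P_n Q_n`. -/
theorem split {n : ℕ} {p m q m' : List (Letter n)} (h : Similar (p ++ m) (q ++ m'))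
    (hlen : p.length = q.length) :
    Similar p q ∨ ∃ p' q' t s x y, p = p' ++ [t] ∧ q = q' ++ [s] ∧ Similar p' q' ∧
      inP t ∧ inQ x ∧ inP s ∧ inQ y ∧ pairNF t x = pairNF s y := by
  generalize hu : p ++ m = u at h
  generalize hv : q ++ m' = v at h
  induction h generalizing p q with
  | nil =>
    obtain rfl := (List.append_eq_nil_iff.1 hu).1
    obtain rfl := (List.append_eq_nil_iff.1 hv).1
    exact .inl nil
  | cons z _ ih =>
    rcases p with _ | ⟨z₁, p⟩ <;> rcases q with _ | ⟨z₂, q⟩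
    · exact .inl nil
    · simp at hlen
    · simp at hlen
    simp only [List.cons_append, List.cons.injEq] at hu hv
    obtain ⟨rfl, hu⟩ := hu
    obtain ⟨rfl, hv⟩ := hv
    rcases ih (Nat.succ.inj hlen) hu hv with h | ⟨p', q', t, s, x, y, rfl, rfl, h, h'⟩
    · exact .inl (cons _ h)
    · exact .inr ⟨_ :: p', _ :: q', t, s, x, y, rfl, rfl, cons _ h, h'⟩
  | pair ht hx hs hy e _ ih =>
    rcases p with _ | ⟨z₁, _ | ⟨x₁, p⟩⟩ <;> rcases q with _ | ⟨z₂, _ | ⟨x₂, q⟩⟩ <;>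
      try simp at hlen
    · exact .inl nil
    · obtain ⟨rfl, -⟩ := List.cons.inj hu
      obtain ⟨rfl, -⟩ := List.cons.inj hv
      exact .inr ⟨[], [], _, _, _, _, rfl, rfl, nil, ht, hx, hs, hy, e⟩
    simp only [List.cons_append, List.cons.injEq] at hu hv
    obtain ⟨rfl, rfl, hu⟩ := hu
    obtain ⟨rfl, rfl, hv⟩ := hv
    rcases ih hlen hu hv with h | ⟨p', q', t, s, x, y, rfl, rfl, h, h'⟩
    · exact .inl (pair ht hx hs hy e h)
    · exact .inr ⟨_ :: _ :: p', _ :: _ :: q', t, s, x, y, rfl, rfl, pair ht hx hs hy e h, h'⟩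

end Similar

theorem word_mem_rIdeal_of_length_lt {n : ℕ} {p m q m' : List (Letter n)}
    (h : word (p ++ m) = word (q ++ m')) (hlen : p.length < q.length) :
    word q ∈ rIdeal (word p) := by
  have hs := Similar.of_word_eq h
  have hl := hs.length_eq
  simp only [List.length_append] at hl
  rw [← List.take_append_drop (q.length - p.length) m, ← List.append_assoc] at hs
  generalize hr : m.take (q.length - p.length) = r at hs
  have hrl : r.length = q.length - p.length := by
    rw [← hr, List.length_take]
    omega
  rcases hs.split (by rw [List.length_append]; omega) with
    h | ⟨p', q', t, s, x, y, hp, rfl, h, -⟩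
  · exact ⟨word r, by rw [← word_append, h.word_eq]⟩
  · rcases List.eq_nil_or_concat r with rfl | ⟨r, z, rfl⟩
    · simp only [List.length_nil] at hrl
      omega
    · rw [List.concat_eq_append, ← List.append_assoc] at hp
      obtain ⟨rfl, -⟩ := List.append_inj' hp rfl
      exact ⟨word (r ++ [s]), by rw [← word_append, ← List.append_assoc, word_append, ← h.word_eq,
        ← word_append]⟩

theorem length_eq_of_word_eq {n : ℕ} {u v : List (Letter n)} (h : word u = word v) :
    u.length = v.length :=
  (Similar.of_word_eq h).length_eq

theorem isIntersectionBase_of_inL {n : ℕ} (hn : 1 ≤ n) (w : List (Letter n)) {x y : Letter n}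
    (h : inL x y) : IsIntersectionBase (word (w ++ [x, y])) := by
  obtain ⟨w', hw', heq⟩ := exists_leftNormal hn w
  refine ⟨w', x, y, List.isChain_append.2 ⟨hw', ?_, ?_⟩, ?_, h⟩
  · exact List.isChain_pair.2 (not_inR_of_inL h)
  · rintro z - z' hz' hR
    obtain rfl : x = z' := by simpa using hz'
    exact not_inP_of_inQ (inQ_of_inR hR) (inP_of_inL h)
  · rw [word_append, heq, ← word_append]

theorem inL_pairNF_of_ne {n : ℕ} (hn : 1 ≤ n) {t x s y : Letter n}
    (h : pairNF t x = pairNF s y) (hts : t ≠ s) : inL (pairNF t x).1 (pairNF t x).2 := by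
  by_cases h₁ : inR t x
  · exact inL_pairNF hn h₁
  by_cases h₂ : inR s y
  · rw [h]
    exact inL_pairNF hn h₂
  rw [pairNF_of_not_inR h₁, pairNF_of_not_inR h₂] at h
  exact absurd (congrArg Prod.fst h) hts

/-- dichotomy for pairs with intersecting principal right ideals. -/
theorem Mn_cases (n : ℕ) (hn : 1 ≤ n) (p q : Mn n)
    (h : (rIdeal p ∩ rIdeal q).Nonempty) :
    (q ∈ rIdeal p ∨ p ∈ rIdeal q) ∨
    (∃ x y : Letter n, inQ x ∧ inQ y ∧ p * gen x = q * gen y ∧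
      IsIntersectionBase (p * gen x) ∧
      ∀ u ∈ rIdeal p ∩ rIdeal q, ∀ z : Letter n, u * gen z ≠ p * gen x) := by
  obtain ⟨P, rfl⟩ := word_surjective p
  obtain ⟨Q, rfl⟩ := word_surjective q
  obtain ⟨_, ⟨m, rfl⟩, m', hm⟩ := h
  obtain ⟨M, rfl⟩ := word_surjective m
  obtain ⟨M', rfl⟩ := word_surjective m'
  rw [← word_append, ← word_append] at hm
  by_cases hpq : word P = word Q
  · exact .inl (.inl ⟨1, by rw [mul_one, hpq]⟩)
  rcases lt_trichotomy P.length Q.length with hlt | hlen | hlt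
  · exact .inl (.inl (word_mem_rIdeal_of_length_lt hm hlt))
  · rcases (Similar.of_word_eq hm).split hlen with
      h | ⟨p', q', t, s, x, y, rfl, rfl, h, -, hx, -, hy, e⟩
    · exact absurd h.word_eq hpq
    have hts : t ≠ s := by
      rintro rfl
      exact hpq (h.append (Similar.refl [t])).word_eq
    have hL := inL_pairNF_of_ne hn e hts
    have hword : ∀ (w : List (Letter n)) (t x : Letter n),
        word (w ++ [t]) * gen x = word (w ++ [(pairNF t x).1, (pairNF t x).2]) := by
      intro w t x
      rw [word_append w [(pairNF t x).1, _], word_pairNF, ← word_append, ← word_singleton,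
        ← word_append, List.append_assoc]
      rfl
    refine .inr ⟨x, y, hx, hy, ?_, ?_, ?_⟩
    · rw [hword, hword, e, word_append, h.word_eq, ← word_append]
    · rw [hword]
      exact isIntersectionBase_of_inL hn p' hL
    · rintro _ ⟨⟨r, rfl⟩, r', hr'⟩ z hz
      obtain ⟨r, rfl⟩ := word_surjective r
      obtain ⟨r', rfl⟩ := word_surjective r'
      have hl := length_eq_of_word_eq (u := p' ++ [t] ++ r ++ [z]) (v := p' ++ [t] ++ [x])
        (by simpa only [word_append, word_singleton] using hz)
      have hl' := length_eq_of_word_eq (u := p' ++ [t] ++ r) (v := q' ++ [s] ++ r')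
        (by rw [word_append, hr', ← word_append])
      simp only [List.length_append, List.length_singleton] at hl hl' hlen
      obtain rfl : r = [] := List.length_eq_zero_iff.1 (by omega)
      obtain rfl : r' = [] := List.length_eq_zero_iff.1 (by simp at hl'; omega)
      rw [← word_append, ← word_append, List.append_nil, List.append_nil] at hr'
      exact hpq hr'
  · exact .inl (.inr (word_mem_rIdeal_of_length_lt hm.symm hlt))

end Malcev
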